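/- Let p ≥ 5 be a prime. Then binom(2p−1, p−1) − 1 ≡ −(2/3)·p³·B_{p−3} (mod p⁴). -/

import Mathlib

open Finset

/-- `x ≡ y (mod p^c)` for rationals: `x = y` or the `p`-adic valuation of `x - y`
is at least `c`. -/
def modCong (p : ℕ) (c : ℤ) (x y : ℚ) : Prop :=
  x = y ∨ c ≤ padicValRat p (x - y)

/-!
Write `S m = ∑ k ∈ [1, p - 1], k ^ m` for `m : ℤ`. Since `∏ (1 - p / k) = 1` for odd `p`, the
binomial coefficient `∏ (1 + p / k)` equals `∏ (1 - p ^ 2 / k ^ 2)`, which is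
`1 - p ^ 2 * S (-2)` mod `p ^ 4`.

Multiplying the Teichmüller representatives `k ^ p` by one of them permutes them mod `p ^ 2`, so the
sum of their `m`-th powers vanishes mod `p ^ 2` when `p - 1 ∤ m`. Expanding
`k ^ (p * m) = k ^ m * (1 + (k ^ (p - 1) - 1)) ^ m` to first order turns this into the Kummer
congruence `(m - 1) * S m ≡ m * S (m + p - 1) (mod p ^ 2)`. For `m = -2` it reads
`3 * S (-2) ≡ 2 * S (p - 3)`, and `S (p - 3) ≡ p * B_{p-3}` by Faulhaber's formula.
-/

open WithZero

section Congruence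

theorem modCong.of_sub_eq_sub {p : ℕ} {c : ℤ} {x y z w : ℚ} (h : modCong p c x y)
    (hsub : z - w = x - y) : modCong p c z w := by
  rwa [modCong, ← sub_eq_zero, hsub, sub_eq_zero]

variable {p : ℕ} [Fact p.Prime] {c d : ℤ} {x y z w : ℚ}

theorem modCong_iff_padicValuation_le :
    modCong p c x y ↔ Rat.padicValuation p (x - y) ≤ exp (-c) := by
  rcases eq_or_ne x y with rfl | hxy
  · simp [modCong]
  · have hxy0 := sub_ne_zero.2 hxy
    simp [modCong, Rat.padicValuation, hxy, hxy0, -exp_neg]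

theorem modCong_intCast_iff_dvd {n : ℕ} {a b : ℤ} :
    modCong p n a b ↔ (p : ℤ) ^ n ∣ a - b := by
  rw [padicValInt_dvd_iff, modCong, ← Int.cast_sub, padicValRat.of_int, Nat.cast_le,
    Int.cast_inj, sub_eq_zero]

theorem padicValuation_intCast_le_one (n : ℤ) : Rat.padicValuation p n ≤ 1 := by
  rw [Rat.padicValuation_cast]
  exact Int.padicValuation_le_one p n

theorem padicValuation_natCast_eq_one {n : ℕ} (hn : ¬p ∣ n) : Rat.padicValuation p n = 1 := by
  rw [← Int.cast_natCast, Rat.padicValuation_cast, Int.padicValuation_eq_one_iff]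
  exact_mod_cast hn

theorem padicValuation_self_pow (n : ℕ) : Rat.padicValuation p ((p : ℚ) ^ n) = exp (-(n : ℤ)) := by
  rw [map_pow, Rat.padicValuation_self, ← exp_nsmul, nsmul_eq_mul, mul_neg_one]

namespace modCong

theorem symm (h : modCong p c x y) : modCong p c y x := by
  rwa [modCong_iff_padicValuation_le, Valuation.map_sub_swap, ← modCong_iff_padicValuation_le]

theorem trans (hxy : modCong p c x y) (hyz : modCong p c y z) : modCong p c x z := by
  rw [modCong_iff_padicValuation_le] at *
  rw [← sub_add_sub_cancel x y z]
  exact Valuation.map_add_le _ hxy hyz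

theorem sum {ι : Type*} {s : Finset ι} {f g : ι → ℚ} (h : ∀ i ∈ s, modCong p c (f i) (g i)) :
    modCong p c (∑ i ∈ s, f i) (∑ i ∈ s, g i) := by
  rw [modCong_iff_padicValuation_le, ← sum_sub_distrib]
  exact Valuation.map_sum_le _ fun i hi ↦ modCong_iff_padicValuation_le.1 (h i hi)

theorem mul_left_of_le (hx : Rat.padicValuation p x ≤ exp (-d)) (h : modCong p c y z) :
    modCong p (d + c) (x * y) (x * z) := by
  rw [modCong_iff_padicValuation_le] at *
  rw [← mul_sub, map_mul, neg_add, exp_add]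
  exact mul_le_mul' hx h

theorem mul_left (hx : Rat.padicValuation p x ≤ 1) (h : modCong p c y z) :
    modCong p c (x * y) (x * z) := by
  simpa using mul_left_of_le (d := 0) (by simpa using hx) h

theorem mul_right (hx : Rat.padicValuation p x ≤ 1) (h : modCong p c y z) :
    modCong p c (y * x) (z * x) := by
  simpa only [mul_comm] using h.mul_left hx

theorem of_mul_left (hx : Rat.padicValuation p x = 1) (h : modCong p c (x * y) (x * z)) :
    modCong p c y z := by
  rwa [modCong_iff_padicValuation_le, ← mul_sub, map_mul, hx, one_mul,
    ← modCong_iff_padicValuation_le] at h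

theorem inv (hx : Rat.padicValuation p x = 1) (hy : Rat.padicValuation p y = 1)
    (h : modCong p c x y) : modCong p c x⁻¹ y⁻¹ := by
  have hx0 : x ≠ 0 := by rintro rfl; simp at hx
  have hy0 : y ≠ 0 := by rintro rfl; simp at hy
  refine (of_mul_left (x := x * y) (by simp [hx, hy]) ?_).symm
  rwa [mul_inv_cancel_right₀ hy0, mul_comm x, mul_inv_cancel_right₀ hx0]

theorem pow (hx : Rat.padicValuation p x ≤ 1) (hy : Rat.padicValuation p y ≤ 1)
    (h : modCong p c x y) (n : ℕ) : modCong p c (x ^ n) (y ^ n) := by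
  induction n with
  | zero => exact Or.inl (by simp)
  | succ n ih =>
    rw [pow_succ, pow_succ]
    exact (ih.mul_right hx).trans (h.mul_left (by simpa using pow_le_one' hy n))

theorem zpow (hx : Rat.padicValuation p x = 1) (hy : Rat.padicValuation p y = 1)
    (h : modCong p c x y) (m : ℤ) : modCong p c (x ^ m) (y ^ m) := by
  obtain ⟨n, rfl | rfl⟩ := m.eq_nat_or_neg
  · exact_mod_cast h.pow hx.le hy.le n
  · simpa using (h.pow hx.le hy.le n).inv (by simp [hx]) (by simp [hy])

end modCong

theorem padicValuation_sub_eq_one (hx : Rat.padicValuation p x ≤ 1)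
    (hy : Rat.padicValuation p y ≤ 1) (h : ¬modCong p 1 x y) :
    Rat.padicValuation p (x - y) = 1 := by
  refine le_antisymm (Valuation.map_sub_le _ hx hy) (not_lt.1 fun hlt ↦ h ?_)
  rwa [modCong_iff_padicValuation_le, ← lt_mul_exp_iff_le exp_ne_zero, ← exp_add, neg_add_cancel,
    exp_zero]

theorem modCong_prod_one_sub {ι : Type*} {s : Finset ι} {f : ι → ℚ} (hc : 0 ≤ c)
    (hf : ∀ i ∈ s, Rat.padicValuation p (f i) ≤ exp (-c)) :
    modCong p (2 * c) (∏ i ∈ s, (1 - f i)) (1 - ∑ i ∈ s, f i) := by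
  classical
  induction s using Finset.induction_on with
  | empty => exact Or.inl (by simp)
  | insert a s ha ih =>
    obtain ⟨hfa, hfs⟩ := forall_mem_insert _ _ _ |>.1 hf
    have hone : Rat.padicValuation p (1 - f a) ≤ 1 :=
      Valuation.map_sub_le _ (map_one _).le (hfa.trans (exp_le_exp.2 (neg_nonpos.2 hc)))
    have hmul : Rat.padicValuation p (f a * ∑ i ∈ s, f i) ≤ exp (-(2 * c)) := by
      rw [map_mul, two_mul, neg_add, exp_add]
      exact mul_le_mul' hfa (Valuation.map_sum_le _ hfs)
    rw [prod_insert ha, sum_insert ha]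
    refine ((ih hfs).mul_left hone).trans (modCong_iff_padicValuation_le.2 ?_)
    convert hmul using 2
    ring

theorem modCong_one_add_zpow (hc : 0 < c) (hx : Rat.padicValuation p x ≤ exp (-c)) (m : ℤ) :
    modCong p (2 * c) ((1 + x) ^ m) (1 + m * x) := by
  have hval : Rat.padicValuation p (1 + x) = 1 :=
    Valuation.map_one_add_of_lt _ (hx.trans_lt (exp_lt_exp.2 (neg_lt_zero.2 hc)))
  have hmul (n : ℤ) : modCong p (2 * c) ((1 + n * x) * (1 + x)) (1 + (n + 1 : ℤ) * x) := by
    have hdiff : (1 + n * x) * (1 + x) - (1 + (n + 1 : ℤ) * x) = n * (x * x) := by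
      push_cast
      ring
    rw [modCong_iff_padicValuation_le, hdiff, map_mul, map_mul, two_mul, neg_add, exp_add]
    exact mul_le_of_le_one_of_le (padicValuation_intCast_le_one n) (mul_le_mul' hx hx)
  have hne : 1 + x ≠ 0 := (Valuation.ne_zero_iff _).1 (hval.trans_ne one_ne_zero)
  induction m using Int.induction_on with
  | zero => exact Or.inl (by simp)
  | succ n ih =>
    rw [zpow_add_one₀ hne]
    exact (ih.mul_right hval.le).trans (hmul n)
  | pred n ih =>
    have hstep := (hmul (-n - 1)).symm
    rw [sub_add_cancel] at hstep
    have hinv : Rat.padicValuation p (1 + x)⁻¹ ≤ 1 := by rw [map_inv₀, hval, inv_one]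
    have h := (ih.trans hstep).mul_right hinv
    rwa [mul_inv_cancel_right₀ hne, ← zpow_sub_one₀ hne] at h

end Congruence

section Binomial

theorem prod_one_add_div_eq_choose (n m : ℕ) :
    ∏ k ∈ Ico 1 (m + 1), (1 + (n : ℚ) / k) = (n + m).choose m := by
  induction m with
  | zero => simp
  | succ m ih =>
    rw [prod_Ico_succ_top (by lia), ih]
    have h : (n + m + 1 : ℚ) * (n + m).choose m = (n + m + 1).choose (m + 1) * (m + 1) := by
      exact_mod_cast Nat.add_one_mul_choose_eq (n + m) m
    rw [← add_assoc, Nat.cast_add_one m]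
    field_simp
    linear_combination h

theorem prod_one_sub_div_eq_neg_one_pow (n : ℕ) :
    ∏ k ∈ Ico 1 n, (1 - (n : ℚ) / k) = (-1) ^ (n - 1) := by
  have hreflect : ∏ k ∈ Ico 1 n, ((n - k : ℕ) : ℚ) = ∏ k ∈ Ico 1 n, (k : ℚ) := by
    simpa using prod_Ico_reflect (fun k ↦ (k : ℚ)) 1 n.le_succ
  have hne : ∏ k ∈ Ico 1 n, (k : ℚ) ≠ 0 :=
    prod_ne_zero_iff.2 fun k hk ↦ Nat.cast_ne_zero.2 (Nat.one_le_iff_ne_zero.1 (mem_Ico.1 hk).1)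
  calc ∏ k ∈ Ico 1 n, (1 - (n : ℚ) / k) = ∏ k ∈ Ico 1 n, -1 * ((n - k : ℕ) / k : ℚ) := by
        refine prod_congr rfl fun k hk ↦ ?_
        obtain ⟨hk1, hkn⟩ := mem_Ico.1 hk
        rw [Nat.cast_sub hkn.le]
        field_simp
        ring
    _ = (-1) ^ (n - 1) := by
        rw [prod_mul_distrib, prod_const, Nat.card_Ico, prod_div_distrib, hreflect, div_self hne,
          mul_one]

theorem choose_two_mul_sub_one_eq_prod {n : ℕ} (hn : Odd n) :
    ((2 * n - 1).choose (n - 1) : ℚ) = ∏ k ∈ Ico 1 n, (1 - ((n : ℚ) / k) ^ 2) := by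
  have hadd := prod_one_add_div_eq_choose n (n - 1)
  rw [Nat.sub_add_cancel hn.pos, show n + (n - 1) = 2 * n - 1 by lia] at hadd
  have hsub := prod_one_sub_div_eq_neg_one_pow n
  rw [(Nat.Odd.sub_odd hn odd_one).neg_one_pow] at hsub
  calc ((2 * n - 1).choose (n - 1) : ℚ)
      = (∏ k ∈ Ico 1 n, (1 + (n : ℚ) / k)) * ∏ k ∈ Ico 1 n, (1 - (n : ℚ) / k) := by
        rw [hadd, hsub, mul_one]
    _ = ∏ k ∈ Ico 1 n, (1 - ((n : ℚ) / k) ^ 2) := by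
        rw [← prod_mul_distrib]
        exact prod_congr rfl fun k _ ↦ by ring

end Binomial

/-- The power sum `1 ^ m + 2 ^ m + ⋯ + (n - 1) ^ m`, for an exponent `m` that may be negative. -/
def zpowSum (n : ℕ) (m : ℤ) : ℚ :=
  ∑ k ∈ Ico 1 n, (k : ℚ) ^ m

section PowerSum

variable {p : ℕ} [Fact p.Prime]

theorem not_dvd_of_mem_Ico_one {n k : ℕ} (hk : k ∈ Ico 1 n) : ¬n ∣ k :=
  Nat.not_dvd_of_pos_of_lt (mem_Ico.1 hk).1 (mem_Ico.1 hk).2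

theorem modCong_choose_two_mul_sub_one (hp2 : p ≠ 2) :
    modCong p 4 ((2 * p - 1).choose (p - 1) - 1) (-(p ^ 2 * zpowSum p (-2))) := by
  have hsum : ∑ k ∈ Ico 1 p, ((p : ℚ) / k) ^ 2 = p ^ 2 * zpowSum p (-2) := by
    rw [zpowSum, mul_sum]
    exact sum_congr rfl fun k _ ↦ by rw [div_pow, div_eq_mul_inv, zpow_neg, zpow_ofNat]
  have hle (k : ℕ) (hk : k ∈ Ico 1 p) :
      Rat.padicValuation p (((p : ℚ) / k) ^ 2) ≤ exp (-2) := by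
    rw [div_pow, map_div₀, map_pow _ (k : ℚ),
      padicValuation_natCast_eq_one (not_dvd_of_mem_Ico_one hk), one_pow, div_one,
      padicValuation_self_pow, Nat.cast_ofNat]
  have h := modCong_prod_one_sub (by norm_num) hle
  rw [← choose_two_mul_sub_one_eq_prod ((Fact.out : p.Prime).odd_of_ne_two hp2), hsum] at h
  exact h.of_sub_eq_sub (by ring)

theorem sum_Ico_one_eq_sum_units_val {M : Type*} [AddCommMonoid M] (f : ℕ → M) :
    ∑ k ∈ Ico 1 p, f k = ∑ u : (ZMod p)ˣ, f (u : ZMod p).val :=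
  sum_bij'
    (fun k hk ↦ Units.mk0 (k : ZMod p)
      (mt (ZMod.natCast_eq_zero_iff k p).1 (not_dvd_of_mem_Ico_one hk)))
    (fun u _ ↦ (u : ZMod p).val)
    (fun _ _ ↦ mem_univ _)
    (fun u _ ↦ mem_Ico.2 ⟨Nat.pos_of_ne_zero ((ZMod.val_ne_zero _).2 u.ne_zero), ZMod.val_lt _⟩)
    (fun k hk ↦ ZMod.val_cast_of_lt (mem_Ico.1 hk).2)
    (fun _ _ ↦ Units.ext (ZMod.natCast_zmod_val _))
    (fun k hk ↦ by rw [Units.val_mk0, ZMod.val_cast_of_lt (mem_Ico.1 hk).2])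

theorem padicValuation_val_eq_one (u : (ZMod p)ˣ) :
    Rat.padicValuation p ((u : ZMod p).val : ℚ) = 1 :=
  padicValuation_natCast_eq_one fun h ↦
    u.ne_zero ((ZMod.natCast_zmod_val (u : ZMod p)).symm.trans
      ((ZMod.natCast_eq_zero_iff _ p).2 h))

theorem zpow_eq_one_of_modCong {u : (ZMod p)ˣ} {m : ℤ}
    (h : modCong p 1 (((u : ZMod p).val : ℚ) ^ m) 1) : u ^ m = 1 := by
  have hu := padicValuation_val_eq_one u
  have hnat (n : ℕ) (hn : modCong p 1 (((u : ZMod p).val : ℚ) ^ n) 1) : u ^ n = 1 := by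
    have hdvd : (p : ℤ) ∣ ((u : ZMod p).val : ℤ) ^ n - 1 := by
      rw [← pow_one (p : ℤ), ← modCong_intCast_iff_dvd]
      push_cast
      exact hn
    rw [← ZMod.intCast_zmod_eq_zero_iff_dvd] at hdvd
    exact Units.ext (by simpa [sub_eq_zero] using hdvd)
  obtain ⟨n, rfl | rfl⟩ := m.eq_nat_or_neg
  · rw [zpow_natCast] at h ⊢
    exact hnat n h
  · rw [zpow_neg, zpow_natCast] at h ⊢
    have hinv := h.inv (by rw [map_inv₀, map_pow, hu, one_pow, inv_one]) (map_one _)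
    rw [inv_inv, inv_one] at hinv
    rw [hnat n hinv, inv_one]

theorem exists_units_zpow_ne_one {m : ℤ} (hm : ¬((p : ℤ) - 1) ∣ m) :
    ∃ u : (ZMod p)ˣ, u ^ m ≠ 1 := by
  obtain ⟨u, hu⟩ := IsCyclic.exists_ofOrder_eq_natCard (α := (ZMod p)ˣ)
  refine ⟨u, fun h ↦ hm ?_⟩
  rwa [← orderOf_dvd_iff_zpow_eq_one, hu, Nat.card_eq_fintype_card, ZMod.card_units,
    Nat.cast_pred (Fact.out : p.Prime).pos] at h

theorem modCong_val_mul_zpow_prime_pow_mul (u v : (ZMod p)ˣ) (n : ℕ) (m : ℤ) :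
    modCong p (n + 1) ((((u * v : (ZMod p)ˣ) : ZMod p).val : ℚ) ^ (p ^ n * m))
      (((u : ZMod p).val : ℚ) ^ (p ^ n * m) * ((v : ZMod p).val : ℚ) ^ (p ^ n * m)) := by
  have hdvd : (p : ℤ) ∣ ((u * v : (ZMod p)ˣ) : ZMod p).val -
      (u : ZMod p).val * (v : ZMod p).val := by
    rw [← ZMod.intCast_zmod_eq_zero_iff_dvd]
    simp
  have hpow : modCong p (n + 1) ((((u * v : (ZMod p)ˣ) : ZMod p).val : ℚ) ^ p ^ n)
      (((u : ZMod p).val * (v : ZMod p).val : ℚ) ^ p ^ n) := by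
    have := modCong_intCast_iff_dvd.2 (dvd_sub_pow_of_dvd_sub hdvd n)
    push_cast at this
    exact this
  rw [← mul_zpow, zpow_mul, zpow_mul, ← Nat.cast_pow, zpow_natCast, zpow_natCast]
  exact hpow.zpow (by rw [map_pow, padicValuation_val_eq_one, one_pow])
    (by simp only [map_pow, map_mul, padicValuation_val_eq_one, mul_one, one_pow]) m

theorem modCong_zpowSum_prime_pow_mul_zero {m : ℤ} (hm : ¬((p : ℤ) - 1) ∣ m) (n : ℕ) :
    modCong p (n + 1) (zpowSum p (p ^ n * m)) 0 := by
  obtain ⟨g, hg⟩ := exists_units_zpow_ne_one hm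
  set f : (ZMod p)ˣ → ℚ := fun u ↦ ((u : ZMod p).val : ℚ) ^ (p ^ n * m) with hf
  have hval (u : (ZMod p)ˣ) : Rat.padicValuation p (f u) = 1 := by
    rw [hf, map_zpow₀, padicValuation_val_eq_one, one_zpow]
  have hfmul (u : (ZMod p)ˣ) : modCong p (n + 1) (f (g * u)) (f g * f u) :=
    modCong_val_mul_zpow_prime_pow_mul g u n m
  have hfg : Rat.padicValuation p (f g - 1) = 1 := by
    refine padicValuation_sub_eq_one (hval g).le (map_one _).le fun h ↦ hg ?_
    have hfrob : g ^ p ^ n = g := Units.ext (ZMod.pow_card_pow _)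
    have := zpow_eq_one_of_modCong h
    rwa [zpow_mul, ← Nat.cast_pow, zpow_natCast, hfrob] at this
  have hsum : modCong p (n + 1) (∑ u, f u) (f g * ∑ u, f u) := by
    conv_lhs => rw [← Equiv.sum_comp (Equiv.mulLeft g)]
    rw [mul_sum]
    exact modCong.sum fun u _ ↦ hfmul u
  rw [zpowSum, sum_Ico_one_eq_sum_units_val fun k ↦ (k : ℚ) ^ (p ^ n * m)]
  exact modCong.of_mul_left hfg (hsum.symm.of_sub_eq_sub (by ring))

theorem modCong_zpow_prime_mul {k : ℕ} (hk : ¬p ∣ k) (m : ℤ) :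
    modCong p 2 ((k : ℚ) ^ (p * m)) ((1 - m) * (k : ℚ) ^ m + m * (k : ℚ) ^ (m + (p - 1))) := by
  have hfermat : modCong p 1 ((k : ℚ) ^ ((p : ℤ) - 1)) 1 := by
    have hdvd : (p : ℤ) ^ 1 ∣ (k : ℤ) ^ (p - 1) - 1 := by
      rw [pow_one, ← Int.modEq_iff_dvd]
      exact (Int.ModEq.pow_card_sub_one_eq_one Fact.out (Nat.isCoprime_iff_coprime.2
        ((Fact.out : p.Prime).coprime_iff_not_dvd.2 hk).symm)).symm
    rw [← Nat.cast_pred (Fact.out : p.Prime).pos, zpow_natCast]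
    exact_mod_cast modCong_intCast_iff_dvd.2 hdvd
  have hk0 : (k : ℚ) ≠ 0 := Nat.cast_ne_zero.2 (by rintro rfl; exact hk (dvd_zero p))
  have hkm : Rat.padicValuation p ((k : ℚ) ^ m) ≤ 1 := by
    rw [map_zpow₀, padicValuation_natCast_eq_one hk, one_zpow]
  have hmul := (modCong_one_add_zpow one_pos (modCong_iff_padicValuation_le.1 hfermat) m).mul_left
    hkm
  rw [add_sub_cancel, ← zpow_mul, ← zpow_add₀ hk0, mul_one,
    show m + ((p : ℤ) - 1) * m = p * m by ring] at hmul
  convert hmul using 1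
  rw [zpow_add₀ hk0]
  ring

theorem modCong_sub_one_mul_zpowSum {m : ℤ} (hm : ¬((p : ℤ) - 1) ∣ m) :
    modCong p 2 ((m - 1) * zpowSum p m) (m * zpowSum p (m + (p - 1))) := by
  have hexpand : modCong p 2 (zpowSum p (p * m))
      ((1 - m) * zpowSum p m + m * zpowSum p (m + (p - 1))) := by
    simp only [zpowSum, mul_sum, ← sum_add_distrib]
    exact modCong.sum fun k hk ↦ modCong_zpow_prime_mul (not_dvd_of_mem_Ico_one hk) m
  have hzero : modCong p 2 (zpowSum p (p * m)) 0 := by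
    simpa using modCong_zpowSum_prime_pow_mul_zero hm 1
  exact (hzero.symm.trans hexpand).of_sub_eq_sub (by ring)

theorem modCong_three_mul_zpowSum_neg_two (hp : 3 < p) :
    modCong p 2 (3 * zpowSum p (-2)) (2 * zpowSum p (p - 3 : ℕ)) := by
  have hndvd : ¬((p : ℤ) - 1) ∣ -2 := fun h ↦ by
    have := Int.le_of_dvd two_pos (dvd_neg.1 h)
    lia
  have h := modCong_sub_one_mul_zpowSum hndvd
  rw [show -2 + ((p : ℤ) - 1) = (p - 3 : ℕ) by lia] at h
  exact h.symm.of_sub_eq_sub (by push_cast; ring)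

end PowerSum

section Bernoulli

variable {p : ℕ} [Fact p.Prime]

theorem padicValuation_bernoulli_le_one {n : ℕ} (hn : ¬(p - 1) ∣ n) :
    Rat.padicValuation p (bernoulli n) ≤ 1 := by
  obtain ⟨k, rfl | rfl⟩ := n.even_or_odd'
  · obtain ⟨a, ha⟩ := Bernoulli.vonStaudt_clausen k
    rw [eq_sub_of_add_eq ha.symm]
    refine Valuation.map_sub_le _ (padicValuation_intCast_le_one a)
      (Valuation.map_sum_le _ fun q hq ↦ ?_)
    obtain ⟨-, hqprime, hqk⟩ := mem_filter.1 hq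
    have hpq : ¬p ∣ q := by
      rw [Nat.prime_dvd_prime_iff_eq Fact.out hqprime]
      rintro rfl
      exact hn hqk
    rw [one_div, map_inv₀, padicValuation_natCast_eq_one hpq, inv_one]
  · obtain rfl | hk := k.eq_zero_or_pos
    · have hp2 : ¬p ∣ 2 := fun h ↦ by
        rw [(Nat.prime_dvd_prime_iff_eq Fact.out Nat.prime_two).1 h] at hn
        exact hn (one_dvd _)
      have h2 : Rat.padicValuation p 2 = 1 := by exact_mod_cast padicValuation_natCast_eq_one hp2
      rw [mul_zero, zero_add, bernoulli_one, map_div₀, h2, Valuation.map_neg, map_one, div_one]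
    · rw [bernoulli_eq_zero_of_odd (odd_two_mul_add_one k) (by lia), map_zero]
      exact zero_le_one

theorem modCong_zpowSum_mul_bernoulli {n : ℕ} (hn0 : n ≠ 0) (hn : n + 1 < p) :
    modCong p 2 (zpowSum p n) (p * bernoulli n) := by
  have hfaulhaber : zpowSum p n = ∑ i ∈ range (n + 1),
      bernoulli i * (n + 1).choose i * p ^ (n + 1 - i) / (n + 1) := by
    rw [← sum_range_pow, sum_range_eq_add_Ico _ (by lia), Nat.cast_zero, zero_pow hn0, zero_add]
    simp only [zpowSum, zpow_natCast]
  have hterm (i : ℕ) (hi : i ∈ range n) :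
      Rat.padicValuation p (bernoulli i * (n + 1).choose i * p ^ (n + 1 - i) / (n + 1)) ≤
        exp (-2) := by
    have hin := mem_range.1 hi
    have hbernoulli : Rat.padicValuation p (bernoulli i) ≤ 1 := by
      obtain rfl | hi0 := i.eq_zero_or_pos
      · simp
      · exact padicValuation_bernoulli_le_one (Nat.not_dvd_of_pos_of_lt hi0 (by lia))
    have hden : Rat.padicValuation p ((n : ℚ) + 1) = 1 := by
      exact_mod_cast padicValuation_natCast_eq_one (Nat.not_dvd_of_pos_of_lt n.succ_pos hn)
    rw [map_div₀, hden, div_one, map_mul, map_mul, padicValuation_self_pow]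
    have hchoose : Rat.padicValuation p ((n + 1).choose i : ℚ) ≤ 1 := by
      exact_mod_cast padicValuation_intCast_le_one ((n + 1).choose i)
    exact mul_le_of_le_one_of_le (mul_le_one' hbernoulli hchoose) (exp_le_exp.2 (by lia))
  have hlast : bernoulli n * (n + 1).choose n * p ^ (n + 1 - n) / (n + 1) = p * bernoulli n := by
    rw [Nat.choose_succ_self_right, Nat.add_sub_cancel_left, pow_one]
    field_simp
    push_cast
    ring
  rw [hfaulhaber, sum_range_succ, hlast, modCong_iff_padicValuation_le, add_sub_cancel_right]
  exact Valuation.map_sum_le _ hterm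

end Bernoulli

theorem stmt8 (p : ℕ) (hp : p.Prime) (hp5 : 5 ≤ p) :
    modCong p 4 (((2*p-1).choose (p-1) : ℚ) - 1)
      (-(2/3) * (p:ℚ)^3 * bernoulli (p-3)) := by
  have : Fact p.Prime := ⟨hp⟩
  have h3 : Rat.padicValuation p 3 = 1 := by
    exact_mod_cast padicValuation_natCast_eq_one (Nat.not_dvd_of_pos_of_lt three_pos (by lia))
  have hbernoulli : modCong p 2 (zpowSum p (p - 3 : ℕ)) (p * bernoulli (p - 3)) :=
    modCong_zpowSum_mul_bernoulli (by lia) (by lia)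
  have hsum : modCong p 2 (zpowSum p (-2)) (2 / 3 * (p * bernoulli (p - 3))) := by
    have h2 : Rat.padicValuation p 2 ≤ 1 := by exact_mod_cast padicValuation_intCast_le_one 2
    exact .of_mul_left h3 (((modCong_three_mul_zpowSum_neg_two (by lia)).trans
      (hbernoulli.mul_left h2)).of_sub_eq_sub (by ring))
  have hsq : Rat.padicValuation p (-(p : ℚ) ^ 2) ≤ exp (-2) := by
    rw [Valuation.map_neg, padicValuation_self_pow, Nat.cast_ofNat]
  refine (modCong_choose_two_mul_sub_one (by lia)).trans ?_
  convert hsum.mul_left_of_le hsq using 1 <;> ring
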